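/- Let p be a prime, r ∈ ℕ_{≥1}, R = ℤ/p^rℤ with maximal ideal I = pR, let n ≥ 2 be even, and let z, z′ ∈ R be units. If ν_p(z − (−1)^{n/2}) = ν_p(z′ − (−1)^{n/2}), then |σ_{z,n}| = |σ_{z′,n}|. -/

import Mathlib

open Matrix

/-- `η(a)` is the matrix `![![a, -1], ![1, 0]]`. -/
def eta {R : Type*} [CommRing R] (a : R) : Matrix (Fin 2) (Fin 2) R := !![a, -1; 1, 0]

/-- `[c₁, …, cₙ] = η(c₁)·η(c₂)⋯η(cₙ)`. -/
def prodEta {R : Type*} [CommRing R] {n : ℕ} (c : Fin n → R) : Matrix (Fin 2) (Fin 2) R :=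
  (List.ofFn fun i => eta (c i)).prod


open scoped Classical in
/-- `ν_p(a)`: the largest `k ∈ {0, …, r}` with `a ≡ 0 (mod p^k)`; in particular `ν_p(0) = r`. -/
noncomputable def nuP (p r : ℕ) (a : ZMod (p ^ r)) : ℕ :=
  Nat.findGreatest (fun k => (p : ZMod (p ^ r)) ^ k ∣ a) r


def etaI {R : Type*} [CommRing R] (a : R) : Matrix (Fin 2) (Fin 2) R := !![0, 1; -1, a]

lemma eta_mul_etaI {R : Type*} [CommRing R] (a : R) : eta a * etaI a = 1 := by
  ext i j; fin_cases i <;> fin_cases j <;> simp [eta, etaI, Matrix.mul_apply, Fin.sum_univ_two]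

lemma etaI_mul_eta {R : Type*} [CommRing R] (a : R) : etaI a * eta a = 1 := by
  ext i j; fin_cases i <;> fin_cases j <;> simp [eta, etaI, Matrix.mul_apply, Fin.sum_univ_two]

lemma prodEta_succ {R : Type*} [CommRing R] {n : ℕ} (c : Fin (n + 1) → R) :
    prodEta c = eta (c 0) * prodEta (fun i => c i.succ) := by
  simp [prodEta, List.ofFn_succ]

/-- tuples in `I` with product `M` -/
def Sg {R : Type*} [CommRing R] (I : Ideal R) (n : ℕ) (M : Matrix (Fin 2) (Fin 2) R) : Type _ :=
  {c : Fin n → R // (∀ i, c i ∈ I) ∧ prodEta c = M}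

instance {R : Type*} [CommRing R] [Finite R] (I : Ideal R) (n : ℕ)
    (M : Matrix (Fin 2) (Fin 2) R) : Finite (Sg I n M) := by
  unfold Sg; infer_instance

def sgEquiv {R : Type*} [CommRing R] (I : Ideal R) (n : ℕ) (M : Matrix (Fin 2) (Fin 2) R) :
    Sg I (n + 1) M ≃ Σ a : I, Sg I n (etaI (a : R) * M) where
  toFun c := ⟨⟨c.1 0, c.2.1 0⟩, ⟨fun i => c.1 i.succ, fun i => c.2.1 _, by
    obtain ⟨c, hc, rfl⟩ := c
    change (prodEta fun i => c i.succ) = etaI (c 0) * prodEta c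
    rw [prodEta_succ c, ← mul_assoc, etaI_mul_eta, one_mul]⟩⟩
  invFun x := ⟨Fin.cons (x.1 : R) x.2.1, by
    intro i
    refine Fin.cases ?_ (fun j => ?_) i
    · simpa using x.1.2
    · simpa using x.2.2.1 j, by
    rw [prodEta_succ]
    simp only [Fin.cons_zero, Fin.cons_succ]
    rw [x.2.2.2, ← mul_assoc, eta_mul_etaI, one_mul]⟩
  left_inv c := by
    apply Subtype.ext
    funext i
    refine Fin.cases ?_ (fun j => ?_) i <;> simp
  right_inv x := by
    obtain ⟨a, c, hc⟩ := x
    rfl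

lemma card_succ {R : Type*} [CommRing R] [Finite R] (I : Ideal R) [Fintype I] (n : ℕ)
    (M : Matrix (Fin 2) (Fin 2) R) :
    Nat.card (Sg I (n + 1) M) = ∑ a : I, Nat.card (Sg I n (etaI (a : R) * M)) := by
  rw [Nat.card_congr (sgEquiv I n M), Nat.card_sigma]

lemma step_eq {R : Type*} [CommRing R] (a b : R) (M : Matrix (Fin 2) (Fin 2) R) :
    etaI b * (etaI a * M) = !![-(M 0 0 - a * M 1 0), -(M 0 1 - a * M 1 1);
      -(b * M 0 0 + (1 - a * b) * M 1 0), -(b * M 0 1 + (1 - a * b) * M 1 1)] := by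
  have e1 : etaI a * M = !![M 1 0, M 1 1; -M 0 0 + a * M 1 0, -M 0 1 + a * M 1 1] := by
    ext i j; fin_cases i <;> fin_cases j <;>
      simp [etaI, Matrix.mul_apply, Fin.sum_univ_two, -Matrix.cons_mul]
  rw [e1]
  ext i j; fin_cases i <;> fin_cases j <;>
    simp [etaI, Matrix.mul_apply, Fin.sum_univ_two] <;> ring

lemma det_etaI {R : Type*} [CommRing R] (a : R) : (etaI a).det = 1 := by
  simp [etaI, Matrix.det_fin_two]

/-- matrices congruent to diagonal ones -/
def Good {R : Type*} [CommRing R] (I : Ideal R) (M : Matrix (Fin 2) (Fin 2) R) : Prop :=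
  M.det = 1 ∧ M 0 1 ∈ I ∧ M 1 0 ∈ I ∧ IsUnit (M 1 1)

lemma good_step {R : Type*} [CommRing R] {I : Ideal R}
    (hI : ∀ d x : R, IsUnit d → x ∈ I → IsUnit (d + x)) {M : Matrix (Fin 2) (Fin 2) R}
    (h : Good I M) {a b : R} (ha : a ∈ I) (hb : b ∈ I) :
    Good I (etaI b * (etaI a * M)) := by
  obtain ⟨h1, h2, h3, h4⟩ := h
  refine ⟨by simp [Matrix.det_mul, det_etaI, h1], ?_, ?_, ?_⟩ <;> rw [step_eq] <;> simp
  · exact I.sub_mem (I.mul_mem_right _ ha) h2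
  · exact I.add_mem (I.neg_mem (I.mul_mem_left _ h3)) (I.neg_mem (I.mul_mem_right _ hb))
  · have := (hI (M 1 1) (b * (M 0 1 - a * M 1 1)) h4 (I.mul_mem_right _ hb)).neg
    convert this using 1
    ring

open scoped Classical in
lemma card_two {R : Type*} [CommRing R] {I : Ideal R} {M : Matrix (Fin 2) (Fin 2) R}
    (h : Good I M) : Nat.card (Sg I 2 M) = if M 1 1 - (-1) = 0 then 1 else 0 := by
  have key : ∀ c : Fin 2 → R, prodEta c = !![c 0 * c 1 - 1, - c 0; c 1, -1] := by
    intro c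
    ext i j; fin_cases i <;> fin_cases j <;>
      simp [prodEta, eta, Matrix.mul_apply, Fin.sum_univ_two, sub_eq_add_neg]
  obtain ⟨h1, h2, h3, h4⟩ := h
  split_ifs with hd
  · have hd' : M 1 1 = -1 := by linear_combination hd
    rw [Nat.card_eq_one_iff_unique]
    refine ⟨⟨fun x y => ?_⟩, ⟨⟨![-M 0 1, M 1 0], ?_, ?_⟩⟩⟩
    · apply Subtype.ext
      have hx := x.2.2
      have hy := y.2.2
      rw [key] at hx hy
      replace hx := hx.trans hy.symm
      have e1 := congrFun (congrFun hx 0) 1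
      have e2 := congrFun (congrFun hx 1) 0
      simp at e1 e2
      funext i
      fin_cases i
      · exact e1
      · exact e2
    · intro i
      fin_cases i
      · exact I.neg_mem h2
      · exact h3
    · rw [key]
      rw [Matrix.det_fin_two, hd'] at h1
      ext i j; fin_cases i <;> fin_cases j <;> simp [hd']
      linear_combination h1
  · rw [Nat.card_eq_zero]
    left
    refine ⟨fun x => hd ?_⟩
    have hx := x.2.2
    rw [key] at hx
    have e1 := congrFun (congrFun hx 1) 1
    simp at e1
    rw [← e1]; ring

lemma main_ind {R : Type*} [CommRing R] [Finite R] (I : Ideal R)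
    (hI : ∀ d x : R, IsUnit d → x ∈ I → IsUnit (d + x)) (m : ℕ) :
    ∀ M M' : Matrix (Fin 2) (Fin 2) R, Good I M → Good I M' →
      Associated (M 1 1 - (-1) ^ (m + 1)) (M' 1 1 - (-1) ^ (m + 1)) →
      Nat.card (Sg I (2 * m + 2) M) = Nat.card (Sg I (2 * m + 2) M') := by
  classical
  have : Fintype I := Fintype.ofFinite _
  induction m with
  | zero =>
    intro M M' h h' hA
    simp only [mul_zero, zero_add]
    rw [card_two h, card_two h']
    simp only [zero_add, pow_one] at hA
    simp only [hA.eq_zero_iff]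
  | succ m ih =>
    intro M M' h h' hA
    have e : 2 * (m + 1) + 2 = (2 * m + 2) + 1 + 1 := by ring
    rw [e, card_succ, card_succ]
    simp only [card_succ I (2 * m + 2)]
    obtain ⟨u, hu⟩ := hA
    obtain ⟨d, hd⟩ := h.2.2.2
    obtain ⟨d', hd'⟩ := h'.2.2.2
    let f : I → I := fun a => ⟨(↑d'⁻¹ : R) * (M' 0 1 + u * (a * M 1 1 - M 0 1)),
      I.mul_mem_left _ (I.add_mem h'.2.1 (I.mul_mem_left _
        (I.sub_mem (I.mul_mem_right _ a.2) h.2.1)))⟩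
    have hf : ∀ a : I, ((f a : I) : R) * M' 1 1 - M' 0 1 = u * (a * M 1 1 - M 0 1) := by
      intro a
      have : (d' : R) * (↑d'⁻¹ : R) = 1 := by simp
      simp only [f]
      rw [← hd']
      linear_combination (M' 0 1 + u * (a * M 1 1 - M 0 1)) * this
    have hinj : Function.Injective f := by
      intro a b hab
      have h1 := hf a
      rw [hab, hf b] at h1
      have h2 := u.isUnit.mul_left_cancel h1
      have h3 : (b : R) * M 1 1 = a * M 1 1 := by linear_combination h2
      exact Subtype.ext (h.2.2.2.mul_right_cancel h3).symm
    refine Fintype.sum_bijective f (Finite.injective_iff_bijective.mp hinj) _ _ fun a => ?_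
    refine Finset.sum_congr rfl fun b _ => ?_
    refine ih _ _ (good_step hI h a.2 b.2) (good_step hI h' (f a).2 b.2) ⟨u, ?_⟩
    rw [step_eq, step_eq]
    simp only [Matrix.of_apply, Matrix.cons_val', Matrix.cons_val_one, Matrix.cons_val_fin_one]
    have h1 := hf a
    rw [pow_succ] at hu
    linear_combination -hu - (b : R) * h1

lemma assoc_nu (p r : ℕ) (hp : p.Prime) (hr : 1 ≤ r) (a : ZMod (p ^ r)) :
    Associated ((p : ZMod (p ^ r)) ^ nuP p r a) a := by
  classical
  have hdvd : (p : ZMod (p ^ r)) ^ nuP p r a ∣ a := by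
    unfold nuP
    exact Nat.findGreatest_spec (P := fun k => (p : ZMod (p ^ r)) ^ k ∣ a) (m := 0)
      (Nat.zero_le _) (by simp)
  have hle : nuP p r a ≤ r := Nat.findGreatest_le _
  have hpr : (p : ZMod (p ^ r)) ^ r = 0 := by
    rw [← Nat.cast_pow]; exact ZMod.natCast_self _
  obtain ⟨t, ht⟩ := hdvd
  rcases hle.eq_or_lt with hk | hk
  · rw [hk, hpr, zero_mul] at ht
    rw [hk, hpr, ht]
  · have hnot : ¬ (p : ZMod (p ^ r)) ∣ t := by
      rintro ⟨s, rfl⟩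
      have := Nat.findGreatest_is_greatest (P := fun k => (p : ZMod (p ^ r)) ^ k ∣ a)
        (n := r) (k := nuP p r a + 1) (by unfold nuP; convert Nat.lt_succ_self _) hk
      apply this
      refine ⟨s, ?_⟩
      rw [pow_succ, mul_assoc]; exact ht
    have hne : NeZero (p ^ r) := ⟨pow_ne_zero _ hp.ne_zero⟩
    have hu : IsUnit t := by
      rw [← ZMod.natCast_zmod_val t, ZMod.isUnit_iff_coprime]
      apply Nat.Coprime.pow_right
      rw [Nat.coprime_comm, hp.coprime_iff_not_dvd]
      rintro ⟨s, hs⟩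
      apply hnot
      refine ⟨s, ?_⟩
      rw [← ZMod.natCast_zmod_val t, hs]; push_cast; rfl
    obtain ⟨u, rfl⟩ := hu
    exact ⟨u, ht.symm⟩

lemma unit_add (p r : ℕ) (d x : ZMod (p ^ r)) (hd : IsUnit d)
    (hx : x ∈ Ideal.span {(p : ZMod (p ^ r))}) : IsUnit (d + x) := by
  rw [Ideal.mem_span_singleton] at hx
  obtain ⟨s, rfl⟩ := hx
  have hn : IsNilpotent ((p : ZMod (p ^ r)) * s) := ⟨r, by
    rw [mul_pow, ← Nat.cast_pow, ZMod.natCast_self, zero_mul]⟩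
  rw [add_comm]
  exact hn.isUnit_add_right_of_commute hd (Commute.all _ _)

lemma good_diag {R : Type*} [CommRing R] (I : Ideal R) (z : R) (hz : IsUnit z) :
    Good I !![z, 0; 0, Ring.inverse z] := by
  refine ⟨?_, by simp, by simp, ?_⟩
  · simp [Matrix.det_fin_two, Ring.mul_inverse_cancel z hz]
  · simpa using hz.ringInverse

lemma assoc_inv {R : Type*} [CommRing R] (z e : R) (hz : IsUnit z) (he : e * e = 1) :
    Associated (z - e) (Ring.inverse z - e) := by
  have h1 := Ring.mul_inverse_cancel z hz
  have hu : IsUnit (-e * Ring.inverse z) :=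
    (IsUnit.of_mul_eq_one e he).neg.mul hz.ringInverse
  obtain ⟨u, hu⟩ := hu
  refine ⟨u, ?_⟩
  rw [hu]
  linear_combination (-e) * h1 + Ring.inverse z * he

/-- For `R = ℤ/p^rℤ` with `I = pR`, even `n ≥ 2`, and units `z, z'`:
if `ν_p(z - (-1)^(n/2)) = ν_p(z' - (-1)^(n/2))` then `|σ_{z,n}| = |σ_{z',n}|`. -/
theorem stmt10 (p r : ℕ) (hp : p.Prime) (hr : 1 ≤ r) (n : ℕ) (hn : 2 ≤ n) (hne : Even n)
    (z z' : ZMod (p ^ r)) (hz : IsUnit z) (hz' : IsUnit z')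
    (h : nuP p r (z - (-1) ^ (n / 2)) = nuP p r (z' - (-1) ^ (n / 2))) :
    Nat.card {c : Fin n → ZMod (p ^ r) //
        (∀ i, c i ∈ Ideal.span {(p : ZMod (p ^ r))}) ∧
        prodEta c = !![z, 0; 0, Ring.inverse z]} =
      Nat.card {c : Fin n → ZMod (p ^ r) //
        (∀ i, c i ∈ Ideal.span {(p : ZMod (p ^ r))}) ∧
        prodEta c = !![z', 0; 0, Ring.inverse z']} := by
  obtain ⟨k, hk⟩ := hne
  obtain ⟨m, rfl⟩ : ∃ m, k = m + 1 := ⟨k - 1, by omega⟩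
  have hn2 : n = 2 * m + 2 := by omega
  subst hn2
  have hdiv : (2 * m + 2) / 2 = m + 1 := by omega
  rw [hdiv] at h
  have hne : NeZero (p ^ r) := ⟨pow_ne_zero _ hp.ne_zero⟩
  have he : ((-1 : ZMod (p ^ r)) ^ (m + 1)) * (-1) ^ (m + 1) = 1 := by
    rw [← mul_pow]; simp
  have hA : Associated (z - (-1) ^ (m + 1)) (z' - (-1) ^ (m + 1)) := by
    have h1 := assoc_nu p r hp hr (z - (-1) ^ (m + 1))
    rw [h] at h1
    exact h1.symm.trans (assoc_nu p r hp hr _)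
  refine main_ind (Ideal.span {(p : ZMod (p ^ r))}) (unit_add p r) m _ _
    (good_diag _ z hz) (good_diag _ z' hz') ?_
  exact ((assoc_inv z _ hz he).symm.trans hA).trans (assoc_inv z' _ hz' he)
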